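/- arXiv:1611.09135 — 7 statements merged into one kernel-verified Lean document; each statement's English description precedes it below -/
import Mathlib

section
/- For every n ∈ ℕ with D(x^n) ≠ 0 one has deg D(x^n) ≤ n + h (an inequality of integers); moreover, there exists N ∈ ℕ such that for every n > N, D(x^n) ≠ 0 and deg D(x^n) = n + h. -/
open Polynomial

/-- Coefficients of a polynomial times an iterated derivative of a monomial. -/
lemma coeff_mul_iterate_derivative_X_pow {R : Type*} [CommSemiring R] (p : R[X]) (i n m : ℕ) :
    (p * derivative^[i] (X ^ n)).coeff m =
      (n.descFactorial i : R) * if n ≤ m + i then p.coeff (m + i - n) else 0 := by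
  rw [iterate_derivative_X_pow_eq_C_mul, mul_left_comm, coeff_C_mul, coeff_mul_X_pow']
  rcases lt_or_ge n i with hi | hi
  · simp [Nat.descFactorial_eq_zero_iff_lt.2 hi]
  · simp only [tsub_le_iff_right]
    congr 3
    omega

/-- A nontrivial linear combination of descending Pochhammer polynomials is nonzero. -/
lemma sum_C_mul_descPochhammer_ne_zero {R : Type*} [CommRing R] [NoZeroDivisors R] [CharZero R]
    (s : Finset ℕ) (c : ℕ → R) (hc : ∃ i ∈ s, c i ≠ 0) :
    ∑ i ∈ s, C (c i) * descPochhammer R i ≠ 0 := by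
  classical
  obtain ⟨hks, hk⟩ := Nat.find_spec hc
  set k := Nat.find hc
  have hmin : ∀ j ∈ s, j < k → c j = 0 := fun j hj hjk => by
    by_contra hne
    exact Nat.find_min hc hjk ⟨hj, hne⟩
  intro h0
  have hev := congrArg (eval (k : R)) h0
  simp only [eval_finsetSum, eval_mul, eval_C, eval_zero,
    descPochhammer_eval_eq_descFactorial] at hev
  rw [Finset.sum_eq_single_of_mem k hks] at hev
  · simp [hk, Nat.descFactorial_self, Nat.factorial_ne_zero] at hev
  · intro j hj hjk
    rcases lt_or_gt_of_ne hjk with hlt | hlt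
    · simp [hmin j hj hlt]
    · simp [Nat.descFactorial_eq_zero_iff_lt.2 hlt]

/-- A nonzero polynomial does not vanish at large natural numbers. -/
lemma exists_forall_lt_eval_natCast_ne_zero {R : Type*} [CommRing R] [IsDomain R] [CharZero R]
    {Q : R[X]} (hQ : Q ≠ 0) : ∃ N : ℕ, ∀ n : ℕ, N < n → Q.eval (n : R) ≠ 0 := by
  have hfin : {n : ℕ | Q.eval (n : R) = 0}.Finite :=
    (finite_setOfPred_isRoot hQ).preimage Nat.cast_injective.injOn
  obtain ⟨N, hN⟩ := hfin.bddAbove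
  exact ⟨N, fun n hn h0 => absurd (hN h0) (not_le.2 hn)⟩

/-- Let `D q = ∑_{i ≤ ν} p i * q⁽ⁱ⁾` be a linear differential operator
with polynomial coefficients, not all zero, and let `h = max {deg (p i) - i : p i ≠ 0}`
be its height. For every `n` with `D (Xⁿ) ≠ 0` one has `deg D (Xⁿ) ≤ n + h` (as
integers); moreover there exists `N : ℕ` such that for every `n > N`, `D (Xⁿ) ≠ 0` and
`deg D (Xⁿ) = n + h`. -/
theorem stmt_8 (ν : ℕ) (p : ℕ → Polynomial ℝ) (hp : ∃ i ≤ ν, p i ≠ 0)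
    (D : Polynomial ℝ →ₗ[ℝ] Polynomial ℝ)
    (hD : ∀ q, D q = ∑ i ∈ Finset.range (ν + 1), p i * (Polynomial.derivative^[i] q))
    (h : ℤ)
    (hh : IsGreatest {z : ℤ | ∃ i ≤ ν, p i ≠ 0 ∧ z = ((p i).natDegree : ℤ) - i} h) :
    (∀ n : ℕ, D (X ^ n) ≠ 0 → ((D (X ^ n)).natDegree : ℤ) ≤ n + h) ∧
    ∃ N : ℕ, ∀ n : ℕ, N < n → D (X ^ n) ≠ 0 ∧ ((D (X ^ n)).natDegree : ℤ) = n + h := by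
  obtain ⟨⟨k, hkν, hk, hkh⟩, hmax⟩ := hh
  have hcoeff : ∀ n m : ℕ, (D (X ^ n)).coeff m = ∑ i ∈ Finset.range (ν + 1),
      (n.descFactorial i : ℝ) * if n ≤ m + i then (p i).coeff (m + i - n) else 0 := fun n m => by
    simp only [hD, finsetSum_coeff, coeff_mul_iterate_derivative_X_pow]
  have hle : ∀ n : ℕ, D (X ^ n) ≠ 0 → ((D (X ^ n)).natDegree : ℤ) ≤ n + h := by
    intro n hn
    by_contra! hlt
    refine hn (leadingCoeff_eq_zero.1 ?_)
    rw [leadingCoeff, hcoeff]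
    refine Finset.sum_eq_zero fun i hi => ?_
    split_ifs with hni
    · by_cases hpi : p i = 0
      · simp [hpi]
      · have := hmax ⟨i, Nat.lt_succ_iff.1 (Finset.mem_range.1 hi), hpi, rfl⟩
        rw [coeff_eq_zero_of_natDegree_lt (by omega), mul_zero]
    · exact mul_zero _
  refine ⟨hle, ?_⟩
  let c : ℕ → ℝ := fun i => if 0 ≤ h + i then (p i).coeff (h + i).toNat else 0
  have hck : c k ≠ 0 := by
    have hdeg : h + k = (p k).natDegree := by omega
    simpa [c, hdeg] using hk
  obtain ⟨N, hN⟩ := exists_forall_lt_eval_natCast_ne_zero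
    (sum_C_mul_descPochhammer_ne_zero (Finset.range (ν + 1)) c
      ⟨k, Finset.mem_range.2 (Nat.lt_succ_of_le hkν), hck⟩)
  refine ⟨max N ν, fun n hn => ?_⟩
  obtain ⟨hNn, hνn⟩ := max_lt_iff.1 hn
  obtain ⟨m, hm⟩ := Int.eq_ofNat_of_zero_le (show 0 ≤ n + h by omega)
  have hne : (D (X ^ n)).coeff m ≠ 0 := by
    convert hN n hNn using 1
    simp only [hcoeff, eval_finsetSum, eval_mul, eval_C, descPochhammer_eval_eq_descFactorial]
    refine Finset.sum_congr rfl fun i _ => ?_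
    rw [mul_comm]
    congr 1
    have hidx : m + i - n = (h + i).toNat := by omega
    have hiff : n ≤ m + i ↔ 0 ≤ h + i := by omega
    simp only [c, hidx, hiff]
  have hD0 : D (X ^ n) ≠ 0 := fun h0 => hne (by rw [h0, coeff_zero])
  refine ⟨hD0, le_antisymm (hle n hD0) ?_⟩
  rw [hm]
  exact_mod_cast le_natDegree_of_ne_zero hne
end

section
/- The family d = (d_n)_{n∈ℕ} of polynomials defined by d_n = x^n if n ≤ N + h and d_n = D(x^{n−h}) if n > N + h (note that n − h > N ≥ 0 when n > N + h, so this is well defined) is a basis of ℝ[x]: it is linearly independent and spans ℝ[x]. -/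
open Polynomial

/-- With `N` such that `D (Xⁿ) ≠ 0` and `deg D (Xⁿ) = n + h` for all
`n > N`, the family `d = (d n)` defined by `d n = Xⁿ` if `n ≤ N + h` and
`d n = D (X^(n-h))` if `n > N + h` (well defined since `n - h > N ≥ 0` there) is a basis
of `ℝ[x]`: linearly independent and spanning. -/
theorem stmt_9 (ν : ℕ) (p : ℕ → Polynomial ℝ) (hp : ∃ i ≤ ν, p i ≠ 0)
    (D : Polynomial ℝ →ₗ[ℝ] Polynomial ℝ)
    (hD : ∀ q, D q = ∑ i ∈ Finset.range (ν + 1), p i * (Polynomial.derivative^[i] q))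
    (h : ℤ)
    (hh : IsGreatest {z : ℤ | ∃ i ≤ ν, p i ≠ 0 ∧ z = ((p i).natDegree : ℤ) - i} h)
    (N : ℕ)
    (hN : ∀ n : ℕ, N < n → D (X ^ n) ≠ 0 ∧ ((D (X ^ n)).natDegree : ℤ) = n + h)
    (d : ℕ → Polynomial ℝ)
    (hd1 : ∀ n : ℕ, (n : ℤ) ≤ N + h → d n = X ^ n)
    (hd2 : ∀ n : ℕ, (N : ℤ) + h < n → d n = D (X ^ ((n : ℤ) - h).toNat)) :
    LinearIndependent ℝ d ∧ Submodule.span ℝ (Set.range d) = ⊤ := by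
  have hdeg (n : ℕ) : (d n).degree = n := by
    rcases le_or_gt (n : ℤ) (N + h) with hn | hn
    · rw [hd1 n hn, degree_X_pow]
    · obtain ⟨hne, hnat⟩ := hN ((n : ℤ) - h).toNat (by omega)
      rw [hd2 n hn, degree_eq_natDegree hne]
      exact congrArg _ (by omega)
  let S : Polynomial.Sequence ℝ := ⟨d, hdeg⟩
  exact ⟨S.linearIndependent,
    S.span fun i => (leadingCoeff_ne_zero.mpr (S.ne_zero i)).isUnit⟩
end

section
/- Let S₁ = { s ∈ ℕ : s ≤ N + h (as integers) and deg(Dq) ≠ s for every q ∈ span{x^n : 0 ≤ n ≤ N} with Dq ≠ 0 } be the set of inaccessible degrees associated with the restriction D₁ of D to span{x^n : 0 ≤ n ≤ N}. Then S = S₁, and hence the residual spaces coincide: span{x^s : s ∈ S} = span{x^s : s ∈ S₁}. -/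
open Polynomial

/-- A linear differential operator of height at most `h` raises degrees by at most `h`. -/
lemma coeff_sum_mul_iterate_derivative_eq_zero {R : Type*} [CommSemiring R] {ν : ℕ}
    {p : ℕ → R[X]} {h : ℤ} (hp : ∀ i ≤ ν, p i ≠ 0 → ((p i).natDegree : ℤ) - i ≤ h)
    {q : R[X]} {k : ℕ} (hk : (q.natDegree : ℤ) + h < k) :
    (∑ i ∈ Finset.range (ν + 1), p i * derivative^[i] q).coeff k = 0 := by
  rw [finsetSum_coeff]
  refine Finset.sum_eq_zero fun i hi => ?_
  by_cases hpi : p i = 0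
  · simp [hpi]
  rcases lt_or_ge q.natDegree i with hqi | hqi
  · simp [iterate_derivative_eq_zero hqi]
  apply coeff_eq_zero_of_natDegree_lt
  have hheight := hp i (Nat.lt_succ_iff.mp (Finset.mem_range.mp hi)) hpi
  have hmul := natDegree_mul_le (p := p i) (q := derivative^[i] q)
  have hder := natDegree_iterate_derivative q i
  omega

lemma mem_span_X_pow_of_natDegree_le {R : Type*} [Semiring R] {q : R[X]} {N : ℕ}
    (hq : q.natDegree ≤ N) : q ∈ Submodule.span R {r : R[X] | ∃ n ≤ N, r = X ^ n} := by
  rw [q.as_sum_range_C_mul_X_pow]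
  refine Submodule.sum_mem _ fun n hn => ?_
  rw [← smul_eq_C_mul]
  exact Submodule.smul_mem _ _ (Submodule.subset_span
    ⟨n, (Nat.lt_succ_iff.mp (Finset.mem_range.mp hn)).trans hq, rfl⟩)

/-- Let `S₁` be the set of inaccessible degrees of the restriction
`D₁` of `D` to `span {Xⁿ : 0 ≤ n ≤ N}`, i.e. the `s ≤ N + h` such that no `q` in that
span with `D q ≠ 0` has `deg (D q) = s`. Then `S = S₁`, and hence the residual spaces
coincide: `span {Xˢ : s ∈ S} = span {Xˢ : s ∈ S₁}`. -/
theorem stmt_12 (ν : ℕ) (p : ℕ → Polynomial ℝ) (hp : ∃ i ≤ ν, p i ≠ 0)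
    (D : Polynomial ℝ →ₗ[ℝ] Polynomial ℝ)
    (hD : ∀ q, D q = ∑ i ∈ Finset.range (ν + 1), p i * (Polynomial.derivative^[i] q))
    (h : ℤ)
    (hh : IsGreatest {z : ℤ | ∃ i ≤ ν, p i ≠ 0 ∧ z = ((p i).natDegree : ℤ) - i} h)
    (N : ℕ)
    (hN : ∀ n : ℕ, N < n → D (X ^ n) ≠ 0 ∧ ((D (X ^ n)).natDegree : ℤ) = n + h)
    (S : Set ℕ)
    (hS : S = {s : ℕ | ∀ q : Polynomial ℝ, D q ≠ 0 → (D q).natDegree ≠ s})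
    (S₁ : Set ℕ)
    (hS₁ : S₁ = {s : ℕ | (s : ℤ) ≤ N + h ∧
      ∀ q ∈ Submodule.span ℝ {r : Polynomial ℝ | ∃ n ≤ N, r = X ^ n},
        D q ≠ 0 → (D q).natDegree ≠ s}) :
    S = S₁ ∧
    Submodule.span ℝ {r : Polynomial ℝ | ∃ s ∈ S, r = X ^ s} =
      Submodule.span ℝ {r : Polynomial ℝ | ∃ s ∈ S₁, r = X ^ s} := by
  have hSS₁ : S = S₁ := by
    subst hS hS₁
    ext s
    constructor
    · intro hs
      refine ⟨?_, fun q _ => hs q⟩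
      by_contra! hlt
      obtain ⟨n, hn⟩ := Int.eq_ofNat_of_zero_le (a := (s : ℤ) - h) (by omega)
      obtain ⟨hne, hdeg⟩ := hN n (by omega)
      exact hs _ hne (by omega)
    · rintro ⟨hs, hinacc⟩ q hq hqs
      rcases le_or_gt q.natDegree N with hqN | hqN
      · exact hinacc q (mem_span_X_pow_of_natDegree_le hqN) hq hqs
      obtain ⟨hne, hdeg⟩ := hN _ hqN
      have herase : (D q.eraseLead).coeff (D (X ^ q.natDegree)).natDegree = 0 := by
        rw [hD q.eraseLead]
        refine coeff_sum_mul_iterate_derivative_eq_zero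
          (fun i hi hpi => hh.2 ⟨i, hi, hpi, rfl⟩) ?_
        have := eraseLead_natDegree_le q
        omega
      have hlead : (D q).coeff (D (X ^ q.natDegree)).natDegree ≠ 0 := by
        have hq0 : q ≠ 0 := by
          rintro rfl
          simp at hqN
        have hsplit : D q = D q.eraseLead + q.leadingCoeff • D (X ^ q.natDegree) := by
          rw [← map_smul, ← map_add, smul_eq_C_mul, eraseLead_add_C_mul_X_pow]
        rw [hsplit, coeff_add, herase]
        simp [hne, hq0]
      have := le_natDegree_of_ne_zero hlead
      omega
  exact ⟨hSS₁, by rw [hSS₁]⟩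
end

section
/- The subspace span{x^s : s ∈ S} is an algebraic complement of the polynomial range of D in ℝ[x]: range(D) ∩ span{x^s : s ∈ S} = {0} and range(D) + span{x^s : s ∈ S} = ℝ[x]. -/
open Polynomial

namespace Polynomial

variable {K : Type*}

/-- A nonzero polynomial in the span of the monomials with exponents in `S` has degree in `S`. -/
theorem natDegree_mem_of_mem_span_X_pow [Semiring K] {S : Set ℕ} {f : K[X]}
    (hf : f ∈ Submodule.span K {r : K[X] | ∃ s ∈ S, r = X ^ s}) (hf0 : f ≠ 0) :
    f.natDegree ∈ S := by
  have hcoeff : ∀ n ∉ S, f.coeff n = 0 := by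
    intro n hn
    have hle : Submodule.span K {r : K[X] | ∃ s ∈ S, r = X ^ s} ≤ LinearMap.ker (lcoeff K n) := by
      rw [Submodule.span_le]
      rintro _ ⟨s, hs, rfl⟩
      have hns : n ≠ s := fun e => hn (e ▸ hs)
      simp [coeff_X_pow, hns]
    simpa using hle hf
  by_contra hn
  exact hf0 (leadingCoeff_eq_zero.mp (hcoeff _ hn))

/-- A subspace containing a polynomial of every degree is everything. -/
theorem submodule_eq_top_of_forall_natDegree [Field K] {V : Submodule K K[X]}
    (hV : ∀ n : ℕ, ∃ g ∈ V, g ≠ 0 ∧ g.natDegree = n) : V = ⊤ := by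
  have key : ∀ (n : ℕ) (f : K[X]), f.degree < n → f ∈ V := by
    intro n
    induction n with
    | zero =>
      intro f hf
      have hf0 : f = 0 := by simpa using hf
      exact hf0 ▸ V.zero_mem
    | succ n ih =>
      intro f hf
      obtain ⟨g, hg, hg0, hgn⟩ := hV n
      have hlead : g.coeff n ≠ 0 := by
        rw [← hgn]
        exact leadingCoeff_ne_zero.mpr hg0
      have hsub : f - (f.coeff n / g.coeff n) • g ∈ V := by
        refine ih _ ((degree_lt_iff_coeff_zero _ _).mpr fun m hm => ?_)
        rcases hm.eq_or_lt with rfl | hlt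
        · simp [hlead]
        · have hfm : f.coeff m = 0 := (degree_lt_iff_coeff_zero _ _).mp hf m hlt
          have hgm : g.coeff m = 0 := coeff_eq_zero_of_natDegree_lt (hgn ▸ hlt)
          simp [hfm, hgm]
      simpa using V.add_mem hsub (V.smul_mem (f.coeff n / g.coeff n) hg)
  exact eq_top_iff.mpr fun f _ =>
    key (f.natDegree + 1) f (degree_le_natDegree.trans_lt (by exact_mod_cast f.natDegree.lt_succ_self))

/-- The monomials whose exponents are not degrees of nonzero elements of a subspace `W`
span a complement of `W`. -/
theorem isCompl_span_X_pow [Field K] (W : Submodule K K[X]) {S : Set ℕ}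
    (hS : ∀ s, s ∈ S ↔ ∀ g ∈ W, g ≠ 0 → g.natDegree ≠ s) :
    IsCompl W (Submodule.span K {r : K[X] | ∃ s ∈ S, r = X ^ s}) := by
  refine ⟨Submodule.disjoint_def.mpr fun f hfW hfS => ?_, codisjoint_iff.mpr ?_⟩
  · by_contra hf0
    exact (hS _).mp (natDegree_mem_of_mem_span_X_pow hfS hf0) f hfW hf0 rfl
  · refine submodule_eq_top_of_forall_natDegree fun n => ?_
    by_cases hn : n ∈ S
    · exact ⟨X ^ n, Submodule.mem_sup_right (Submodule.subset_span ⟨n, hn, rfl⟩),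
        pow_ne_zero n X_ne_zero, natDegree_X_pow n⟩
    · rw [hS] at hn
      push Not at hn
      obtain ⟨g, hg, hg0, hgn⟩ := hn
      exact ⟨g, Submodule.mem_sup_left hg, hg0, hgn⟩

end Polynomial

/-- The residual space `span {Xˢ : s ∈ S}` is an algebraic complement
of the polynomial range of `D` in `ℝ[x]`:
`range D ⊓ span {Xˢ : s ∈ S} = ⊥` and `range D ⊔ span {Xˢ : s ∈ S} = ⊤`. -/
theorem stmt_13 (ν : ℕ) (p : ℕ → Polynomial ℝ) (hp : ∃ i ≤ ν, p i ≠ 0)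
    (D : Polynomial ℝ →ₗ[ℝ] Polynomial ℝ)
    (hD : ∀ q, D q = ∑ i ∈ Finset.range (ν + 1), p i * (Polynomial.derivative^[i] q))
    (h : ℤ)
    (hh : IsGreatest {z : ℤ | ∃ i ≤ ν, p i ≠ 0 ∧ z = ((p i).natDegree : ℤ) - i} h)
    (N : ℕ)
    (hN : ∀ n : ℕ, N < n → D (X ^ n) ≠ 0 ∧ ((D (X ^ n)).natDegree : ℤ) = n + h)
    (S : Set ℕ)
    (hS : S = {s : ℕ | ∀ q : Polynomial ℝ, D q ≠ 0 → (D q).natDegree ≠ s}) :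
    LinearMap.range D ⊓ Submodule.span ℝ {r : Polynomial ℝ | ∃ s ∈ S, r = X ^ s} = ⊥ ∧
    LinearMap.range D ⊔ Submodule.span ℝ {r : Polynomial ℝ | ∃ s ∈ S, r = X ^ s} = ⊤ := by
  have hcompl := isCompl_span_X_pow (LinearMap.range D) (S := S) (by simp [hS])
  exact ⟨hcompl.inf_eq_bot, hcompl.sup_eq_top⟩
end

section
/- There exists a family s = (s_n)_{n∈ℕ} of real polynomials such that: (a) s is a basis of ℝ[x] (linearly independent and spanning); (b) s_n = x^n for every n > N; (c) s_n ∈ span{x^k : 0 ≤ k ≤ N} for every n ≤ N; (d) every n with D(s_n) = 0 satisfies n ≤ N; and (e) the map n ↦ deg D(s_n) is strictly increasing on the set {n ∈ ℕ : D(s_n) ≠ 0}. (That is, the matrix of D relative to (s, x) is in pre-lower-row-echelon form, and s is a standard basis associated with D relative to the monomial basis.) -/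
open Polynomial

/-- A finite-dimensional space `V` has a basis on which the degrees of the images under a linear
map `f` into polynomials increase strictly, after the basis vectors in the kernel. -/
lemma exists_basis_degree_map_lt {K E : Type*} [Field K] [AddCommGroup E] [Module K E]
    (f : E →ₗ[K] K[X]) (M : ℕ) (V : Submodule K E) [FiniteDimensional K V]
    (hV : V ≤ (degreeLT K M).comap f) :
    ∃ (d : ℕ) (b : Fin d → E), LinearIndependent K b ∧ Submodule.span K (Set.range b) = V ∧
      ∀ i j, i < j → f (b j) ≠ 0 → (f (b i)).degree < (f (b j)).degree := by
  induction M generalizing V with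
  | zero =>
    let B := Module.finBasis K V
    refine ⟨_, fun i => (B i : E), B.linearIndependent.map' V.subtype V.ker_subtype, ?_, ?_⟩
    · have := congrArg (Submodule.map V.subtype) B.span_eq
      rw [Submodule.map_span, ← Set.range_comp, Submodule.map_top, Submodule.range_subtype] at this
      exact this
    · intro i j _ hj
      have := hV (B j).2
      rw [Submodule.mem_comap, mem_degreeLT] at this
      exact absurd (degree_eq_bot.mp (by simpa using this)) hj
  | succ M ih =>
    let g : E →ₗ[K] K := (lcoeff K M).comp f
    have hg (x : E) : g x = (f x).coeff M := rfl
    have hlt {x : E} (hx : x ∈ V) (hgx : g x = 0) : (f x).degree < M := by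
      have := hV hx
      rw [Submodule.mem_comap, mem_degreeLT] at this
      rw [degree_lt_iff_coeff_zero] at this ⊢
      intro m hm
      rcases hm.eq_or_lt with rfl | hm
      · exact hgx
      · exact this m hm
    by_cases hz : ∀ x ∈ V, g x = 0
    · exact ih V fun x hx => by
        rw [Submodule.mem_comap, mem_degreeLT]
        exact hlt hx (hz x hx)
    push Not at hz
    obtain ⟨v, hv, hgv⟩ := hz
    have hW : V ⊓ LinearMap.ker g ≤ (degreeLT K M).comap f := fun x hx => by
      rw [Submodule.mem_comap, mem_degreeLT]
      exact hlt hx.1 hx.2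
    have : FiniteDimensional K (V ⊓ LinearMap.ker g : Submodule K E) :=
      Submodule.finiteDimensional_of_le inf_le_left
    obtain ⟨d, b, hb, hspan, hdeg⟩ := ih _ hW
    refine ⟨d + 1, Fin.snoc b v, ?_, ?_, ?_⟩
    · rw [linearIndependent_finSnoc, hspan]
      exact ⟨hb, fun hmem => hgv hmem.2⟩
    · rw [Fin.range_snoc, Submodule.span_insert, hspan]
      apply le_antisymm
      · exact sup_le ((Submodule.span_singleton_le_iff_mem _ _).mpr hv) inf_le_left
      · intro x hx
        refine Submodule.mem_sup.mpr ⟨(g x / g v) • v,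
          Submodule.smul_mem _ _ (Submodule.mem_span_singleton_self v),
          x - (g x / g v) • v, ⟨V.sub_mem hx (V.smul_mem _ hv), ?_⟩, by abel⟩
        simp [hgv]
    · intro i j hij hj
      obtain ⟨i, rfl⟩ := Fin.exists_castSucc_eq.mpr (hij.trans_le (Fin.le_last j)).ne
      induction j using Fin.lastCases with
      | last =>
        rw [Fin.snoc_castSucc, Fin.snoc_last]
        have hi := hW (hspan ▸ Submodule.subset_span (Set.mem_range_self i))
        rw [Submodule.mem_comap, mem_degreeLT] at hi
        exact hi.trans_le (le_degree_of_ne_zero hgv)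
      | cast j =>
        rw [Fin.snoc_castSucc] at hj ⊢
        rw [Fin.snoc_castSucc]
        exact hdeg i j (by simpa using hij) hj

/-- A basis of the polynomials of degree less than `d`, completed by the monomials `X ^ n` with
`d ≤ n`, is a basis of all polynomials. -/
lemma linearIndependent_and_span_extend_X_pow {K : Type*} [Field K] {d : ℕ} {b : Fin d → K[X]}
    (hb : LinearIndependent K b) (hspan : Submodule.span K (Set.range b) = degreeLT K d) :
    LinearIndependent K (fun n => if hn : n < d then b ⟨n, hn⟩ else X ^ n) ∧
      Submodule.span K (Set.range fun n => if hn : n < d then b ⟨n, hn⟩ else X ^ n) = ⊤ := by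
  set s : ℕ → K[X] := fun n => if hn : n < d then b ⟨n, hn⟩ else X ^ n with hs
  have hX : LinearIndependent K (fun n : ℕ => (X ^ n : K[X])) := by
    simpa [coe_basisMonomials, X_pow_eq_monomial] using (basisMonomials K).linearIndependent
  constructor
  · have hcomp : s ∘ finSumNatEquiv d = Sum.elim b (fun k => X ^ (d + k)) := by
      funext x
      rcases x with i | k
      · simp [hs]
      · simp [hs]
    rw [← linearIndependent_equiv (finSumNatEquiv d), hcomp]
    refine hb.sum_type (hX.comp (fun k => d + k) (add_right_injective d)) ?_
    have := hX.disjoint_span_image (s := Set.Iio d) (t := Set.Ici d)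
      (Set.Iio_disjoint_Ici le_rfl)
    refine this.mono ?_ (Submodule.span_mono ?_)
    · classical
      rw [hspan, degreeLT_eq_span_X_pow]
      refine Submodule.span_mono ?_
      intro r hr
      simpa using hr
    · rintro _ ⟨k, rfl⟩
      exact ⟨d + k, by simp, rfl⟩
  · rw [eq_top_iff, ← (basisMonomials K).span_eq, Submodule.span_le]
    rintro _ ⟨n, rfl⟩
    simp only [coe_basisMonomials, ← X_pow_eq_monomial]
    by_cases hn : n < d
    · have hle : Submodule.span K (Set.range b) ≤ Submodule.span K (Set.range s) :=
        Submodule.span_mono (by rintro _ ⟨i, rfl⟩; exact ⟨i, by simp [hs]⟩)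
      refine hle ?_
      rw [hspan, mem_degreeLT, degree_X_pow]
      exact_mod_cast hn
    · exact Submodule.subset_span ⟨n, by simp [hs, hn]⟩

/-- A differential operator of height at most `h` raises degrees by at most `h`. -/
lemma sum_mul_iterate_derivative_mem_degreeLT {R : Type*} [CommRing R] {ν : ℕ} {p : ℕ → R[X]}
    {h : ℤ} (hp : ∀ i ≤ ν, p i ≠ 0 → ((p i).natDegree : ℤ) - i ≤ h) {m M : ℕ}
    (hM : (m : ℤ) + h ≤ M) {q : R[X]} (hq : q ∈ degreeLT R m) :
    ∑ i ∈ Finset.range (ν + 1), p i * derivative^[i] q ∈ degreeLT R M := by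
  refine Submodule.sum_mem _ fun i hi => ?_
  rw [mem_degreeLT]
  by_cases hz : p i * derivative^[i] q = 0
  · simp [hz]
  have hpi : p i ≠ 0 := left_ne_zero_of_mul hz
  have hdq : derivative^[i] q ≠ 0 := right_ne_zero_of_mul hz
  have hq0 : q ≠ 0 := fun h0 => hdq (by simp [h0])
  have hqm : q.natDegree < m := (natDegree_lt_iff_degree_lt hq0).mpr (mem_degreeLT.mp hq)
  have hiq : i ≤ q.natDegree := by
    by_contra! hlt
    exact hdq (iterate_derivative_eq_zero hlt)
  have h₁ := hp i (Nat.lt_succ_iff.mp (Finset.mem_range.mp hi)) hpi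
  have h₂ := natDegree_iterate_derivative q i
  have h₃ : (p i * derivative^[i] q).natDegree ≤ _ := natDegree_mul_le
  exact (natDegree_lt_iff_degree_lt hz).mp (by omega)

/-- There exists a family `s = (s n)` of real polynomials such that:
(a) `s` is a basis of `ℝ[x]`; (b) `s n = Xⁿ` for `n > N`; (c) `s n ∈ span {Xᵏ : k ≤ N}`
for `n ≤ N`; (d) every `n` with `D (s n) = 0` satisfies `n ≤ N`; (e) `n ↦ deg D (s n)`
is strictly increasing on `{n : D (s n) ≠ 0}`. That is, the matrix of `D` relative to
`(s, x)` is in pre-lower-row-echelon form and `s` is a standard basis associated with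
`D` relative to the monomial basis. -/
theorem stmt_15 (ν : ℕ) (p : ℕ → Polynomial ℝ) (hp : ∃ i ≤ ν, p i ≠ 0)
    (D : Polynomial ℝ →ₗ[ℝ] Polynomial ℝ)
    (hD : ∀ q, D q = ∑ i ∈ Finset.range (ν + 1), p i * (Polynomial.derivative^[i] q))
    (h : ℤ)
    (hh : IsGreatest {z : ℤ | ∃ i ≤ ν, p i ≠ 0 ∧ z = ((p i).natDegree : ℤ) - i} h)
    (N : ℕ)
    (hN : ∀ n : ℕ, N < n → D (X ^ n) ≠ 0 ∧ ((D (X ^ n)).natDegree : ℤ) = n + h) :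
    ∃ s : ℕ → Polynomial ℝ,
      (LinearIndependent ℝ s ∧ Submodule.span ℝ (Set.range s) = ⊤) ∧
      (∀ n : ℕ, N < n → s n = X ^ n) ∧
      (∀ n ≤ N, s n ∈ Submodule.span ℝ {r : Polynomial ℝ | ∃ k ≤ N, r = X ^ k}) ∧
      (∀ n : ℕ, D (s n) = 0 → n ≤ N) ∧
      (∀ m n : ℕ, D (s m) ≠ 0 → D (s n) ≠ 0 → m < n →
        (D (s m)).natDegree < (D (s n)).natDegree) := by
  have hmap : degreeLT ℝ (N + 1) ≤ (degreeLT ℝ (D (X ^ (N + 1))).natDegree).comap D := by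
    intro q hq
    rw [Submodule.mem_comap, hD q]
    refine sum_mul_iterate_derivative_mem_degreeLT (fun i hi hpi => hh.2 ⟨i, hi, hpi, rfl⟩) ?_ hq
    exact (hN (N + 1) N.lt_succ_self).2.ge
  have : FiniteDimensional ℝ (degreeLT ℝ (N + 1)) :=
    Module.Finite.equiv (degreeLTEquiv ℝ (N + 1)).symm
  obtain ⟨d, b, hb, hspan, hdeg⟩ := exists_basis_degree_map_lt D _ _ hmap
  obtain rfl : d = N + 1 := by
    have := finrank_span_eq_card hb
    rw [hspan, (degreeLTEquiv ℝ (N + 1)).finrank_eq] at this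
    simpa using this.symm
  have hbmem (i) : b i ∈ degreeLT ℝ (N + 1) :=
    hspan ▸ Submodule.subset_span (Set.mem_range_self i)
  have hlow {n : ℕ} (hn : n ≤ N) :
      (if hn : n < N + 1 then b ⟨n, hn⟩ else X ^ n) = b ⟨n, Nat.lt_succ_of_le hn⟩ :=
    dif_pos _
  have hhigh {n : ℕ} (hn : N < n) :
      (if hn : n < N + 1 then b ⟨n, hn⟩ else X ^ n) = X ^ n :=
    dif_neg (by omega)
  refine ⟨fun n => if hn : n < N + 1 then b ⟨n, hn⟩ else X ^ n,
    linearIndependent_and_span_extend_X_pow hb hspan, fun n hn => hhigh hn, ?_, ?_, ?_⟩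
  · intro n hn
    simp only [hlow hn]
    have := hbmem ⟨n, Nat.lt_succ_of_le hn⟩
    rw [degreeLT_eq_span_X_pow] at this
    refine Submodule.span_mono ?_ this
    intro r hr
    simp only [Finset.coe_image, Set.mem_image, Finset.mem_coe, Finset.mem_range] at hr
    obtain ⟨k, hk, rfl⟩ := hr
    exact ⟨k, Nat.lt_succ_iff.mp hk, rfl⟩
  · intro n hn
    by_contra! hlt
    simp only [hhigh hlt] at hn
    exact (hN n hlt).1 hn
  · intro m n hm hn hmn
    rcases le_or_gt n N with hnN | hnN
    · simp only [hlow hnN, hlow (hmn.le.trans hnN)] at hm hn ⊢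
      exact natDegree_lt_natDegree hm (hdeg _ _ hmn hn)
    have h₁ := (hN n hnN).2
    simp only [hhigh hnN]
    rcases le_or_gt m N with hmN | hmN
    · simp only [hlow hmN] at hm ⊢
      have h₂ := (natDegree_lt_iff_degree_lt hm).mpr (mem_degreeLT.mp (hmap (hbmem _)))
      have h₃ := (hN (N + 1) N.lt_succ_self).2
      omega
    · simp only [hhigh hmN]
      have h₂ := (hN m hmN).2
      omega
end

section
/- Let s = (s_n)_{n∈ℕ} be any family of real polynomials such that s is a basis of ℝ[x], s_n = x^n for every n > N, and the map n ↦ deg D(s_n) is strictly increasing on {n ∈ ℕ : D(s_n) ≠ 0}. Then the set {s_n : D(s_n) = 0} spans the kernel of D, and the set of inaccessible degrees satisfies S = { m ∈ ℕ : m ≤ N + h (as integers) } \ { deg D(s_n) : 0 ≤ n ≤ N and D(s_n) ≠ 0 }. -/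
open Polynomial

/-- If the nonzero images `D (s n)` have pairwise distinct degrees, then the degree of the image
of a linear combination of the `s n` is the largest degree occurring in it. -/
theorem degree_map_linearCombination_eq_sup {R ι : Type*} [Field R] (D : R[X] →ₗ[R] R[X])
    (s : ι → R[X])
    (hdeg : ∀ m n, D (s m) ≠ 0 → D (s n) ≠ 0 → m ≠ n →
      (D (s m)).natDegree ≠ (D (s n)).natDegree) (c : ι →₀ R) :
    (D (Finsupp.linearCombination R s c)).degree = c.support.sup fun n => (D (s n)).degree := by
  have hc : ∀ n ∈ c.support, (c n • D (s n)).degree = (D (s n)).degree := fun n hn =>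
    degree_smul_of_smul_regular _ (IsSMulRegular.of_ne_zero (Finsupp.mem_support_iff.1 hn))
  rw [Finsupp.linearCombination_apply, Finsupp.sum, map_sum]
  simp only [map_smul]
  rw [degree_sum_eq_of_disjoint]
  · exact Finset.sup_congr rfl hc
  · rintro m ⟨hm, hm0⟩ n ⟨hn, hn0⟩ hmn heq
    simp only [Function.comp_apply, hc m hm, hc n hn] at heq
    exact hdeg m n (right_ne_zero_of_smul hm0) (right_ne_zero_of_smul hn0) hmn
      (natDegree_eq_of_degree_eq heq)

/-- Let `s = (s n)` be any basis of `ℝ[x]` with `s n = Xⁿ` for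
`n > N` such that `n ↦ deg D (s n)` is strictly increasing on `{n : D (s n) ≠ 0}`.
Then `{s n : D (s n) = 0}` spans the kernel of `D`, and the set of inaccessible degrees
satisfies `S = {m : m ≤ N + h} \ {deg D (s n) : n ≤ N, D (s n) ≠ 0}`. -/
theorem stmt_16 (ν : ℕ) (p : ℕ → Polynomial ℝ) (hp : ∃ i ≤ ν, p i ≠ 0)
    (D : Polynomial ℝ →ₗ[ℝ] Polynomial ℝ)
    (hD : ∀ q, D q = ∑ i ∈ Finset.range (ν + 1), p i * (Polynomial.derivative^[i] q))
    (h : ℤ)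
    (hh : IsGreatest {z : ℤ | ∃ i ≤ ν, p i ≠ 0 ∧ z = ((p i).natDegree : ℤ) - i} h)
    (N : ℕ)
    (hN : ∀ n : ℕ, N < n → D (X ^ n) ≠ 0 ∧ ((D (X ^ n)).natDegree : ℤ) = n + h)
    (S : Set ℕ)
    (hS : S = {s : ℕ | ∀ q : Polynomial ℝ, D q ≠ 0 → (D q).natDegree ≠ s})
    (s : ℕ → Polynomial ℝ)
    (hbasis : LinearIndependent ℝ s ∧ Submodule.span ℝ (Set.range s) = ⊤)
    (htail : ∀ n : ℕ, N < n → s n = X ^ n)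
    (hmono : ∀ m n : ℕ, D (s m) ≠ 0 → D (s n) ≠ 0 → m < n →
      (D (s m)).natDegree < (D (s n)).natDegree) :
    Submodule.span ℝ {r : Polynomial ℝ | ∃ n : ℕ, D (s n) = 0 ∧ r = s n} =
      LinearMap.ker D ∧
    S = {m : ℕ | (m : ℤ) ≤ N + h} \
      {m : ℕ | ∃ n ≤ N, D (s n) ≠ 0 ∧ m = (D (s n)).natDegree} := by
  have hdeg : ∀ m n, D (s m) ≠ 0 → D (s n) ≠ 0 → m ≠ n →
      (D (s m)).natDegree ≠ (D (s n)).natDegree := fun m n hm hn hmn =>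
    hmn.lt_or_gt.elim (fun hlt => (hmono m n hm hn hlt).ne) fun hlt => (hmono n m hn hm hlt).ne'
  have hrep : ∀ q, ∃ c : ℕ →₀ ℝ, Finsupp.linearCombination ℝ s c = q := fun q =>
    Finsupp.mem_span_range_iff_exists_finsupp.1 (hbasis.2 ▸ Submodule.mem_top)
  refine ⟨le_antisymm ?_ ?_, ?_⟩
  · rw [Submodule.span_le]
    rintro _ ⟨n, hn, rfl⟩
    exact hn
  · intro q hq
    obtain ⟨c, rfl⟩ := hrep q
    have hsup := degree_map_linearCombination_eq_sup D s hdeg c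
    rw [LinearMap.mem_ker.1 hq, degree_zero, eq_comm, Finset.sup_eq_bot_iff] at hsup
    exact Submodule.sum_mem _ fun n hn => Submodule.smul_mem _ _
      (Submodule.subset_span ⟨n, degree_eq_bot.1 (hsup n hn), rfl⟩)
  · subst hS
    ext m
    constructor
    · intro hm
      refine ⟨?_, ?_⟩
      · by_contra hlt
        simp only [Set.mem_ofPred_eq, not_le] at hlt
        obtain ⟨n, hn⟩ := Int.eq_ofNat_of_zero_le (show 0 ≤ (m : ℤ) - h by omega)
        obtain ⟨hn0, hndeg⟩ := hN n (by omega)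
        exact hm _ hn0 (by omega)
      · rintro ⟨n, -, hn0, rfl⟩
        exact hm _ hn0 rfl
    · rintro ⟨hle, hm⟩ q hq hqm
      simp only [Set.mem_ofPred_eq] at hle
      obtain ⟨c, rfl⟩ := hrep q
      have hsup := degree_map_linearCombination_eq_sup D s hdeg c
      have hne : c.support.Nonempty := by
        rw [Finset.nonempty_iff_ne_empty]
        intro hempty
        rw [hempty, Finset.sup_empty] at hsup
        exact hq (degree_eq_bot.1 hsup)
      obtain ⟨n, -, hn⟩ := Finset.exists_mem_eq_sup _ hne fun n => (D (s n)).degree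
      rw [hn] at hsup
      have hn0 : D (s n) ≠ 0 := fun hzero => hq (by rwa [hzero, degree_zero, degree_eq_bot] at hsup)
      have hnm : m = (D (s n)).natDegree := by rw [← hqm, natDegree_eq_of_degree_eq hsup]
      rcases le_or_gt n N with hnN | hnN
      · exact hm ⟨n, hnN, hn0, hnm⟩
      · have hndeg := (hN n hnN).2
        rw [← htail n hnN] at hndeg
        omega
end

section
/- For every m ∈ ℕ with m ∉ S there exist polynomials q, r ∈ ℝ[x] with r ∈ span{x^s : s ∈ S} and D(q) = x^m + r. (A complete sequence of canonical polynomials associated with D, indexed by all accessible degrees m ∉ S, exists.) -/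
open Polynomial

/-- If a submodule of polynomials contains a nonzero polynomial of every degree, then it is
everything. -/
theorem Polynomial.submodule_eq_top_of_forall_exists_natDegree_eq {K : Type*} [Field K]
    (W : Submodule K K[X]) (hW : ∀ n : ℕ, ∃ f ∈ W, f ≠ 0 ∧ f.natDegree = n) : W = ⊤ := by
  refine eq_top_iff.2 fun g _ => ?_
  have monomial_mem : ∀ n : ℕ, (X ^ n : K[X]) ∈ W := by
    intro n
    induction n using Nat.strong_induction_on with
    | _ n ih =>
      obtain ⟨f, hfW, hf0, rfl⟩ := hW n
      have lower_mem : f.eraseLead ∈ W := by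
        rw [f.eraseLead.as_sum_support_C_mul_X_pow]
        refine W.sum_mem fun k hk => ?_
        rw [← smul_eq_C_mul]
        exact W.smul_mem _ (ih k (lt_natDegree_of_mem_eraseLead_support hk))
      have lead_mem := W.sub_mem hfW lower_mem
      rw [sub_eq_of_eq_add' f.eraseLead_add_monomial_natDegree_leadingCoeff.symm,
        ← C_mul_X_pow_eq_monomial, ← smul_eq_C_mul] at lead_mem
      exact (W.smul_mem_iff (leadingCoeff_ne_zero.2 hf0)).1 lead_mem
  rw [g.as_sum_support_C_mul_X_pow]
  refine W.sum_mem fun k _ => ?_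
  rw [← smul_eq_C_mul]
  exact W.smul_mem _ (monomial_mem k)

/-- For every `m ∉ S` there exist polynomials `q, r` with
`r ∈ span {Xˢ : s ∈ S}` and `D q = Xᵐ + r`: a complete sequence of canonical
polynomials, indexed by all accessible degrees, exists. -/
theorem stmt_18 (ν : ℕ) (p : ℕ → Polynomial ℝ) (hp : ∃ i ≤ ν, p i ≠ 0)
    (D : Polynomial ℝ →ₗ[ℝ] Polynomial ℝ)
    (hD : ∀ q, D q = ∑ i ∈ Finset.range (ν + 1), p i * (Polynomial.derivative^[i] q))
    (h : ℤ)
    (hh : IsGreatest {z : ℤ | ∃ i ≤ ν, p i ≠ 0 ∧ z = ((p i).natDegree : ℤ) - i} h)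
    (N : ℕ)
    (hN : ∀ n : ℕ, N < n → D (X ^ n) ≠ 0 ∧ ((D (X ^ n)).natDegree : ℤ) = n + h)
    (S : Set ℕ)
    (hS : S = {s : ℕ | ∀ q : Polynomial ℝ, D q ≠ 0 → (D q).natDegree ≠ s}) :
    ∀ m ∉ S, ∃ q r : Polynomial ℝ,
      r ∈ Submodule.span ℝ {u : Polynomial ℝ | ∃ s ∈ S, u = X ^ s} ∧
      D q = X ^ m + r := by
  intro m _
  set R := Submodule.span ℝ {u : Polynomial ℝ | ∃ s ∈ S, u = X ^ s}
  have sup_eq_top : LinearMap.range D ⊔ R = ⊤ := by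
    refine submodule_eq_top_of_forall_exists_natDegree_eq _ fun n => ?_
    by_cases hn : n ∈ S
    · exact ⟨X ^ n, Submodule.mem_sup_right (Submodule.subset_span ⟨n, hn, rfl⟩),
        pow_ne_zero _ X_ne_zero, natDegree_X_pow n⟩
    · rw [hS] at hn
      simp only [Set.mem_ofPred_eq, not_forall, not_not] at hn
      obtain ⟨q, hq, hdeg⟩ := hn
      exact ⟨D q, Submodule.mem_sup_left ⟨q, rfl⟩, hq, hdeg⟩
  have X_pow_mem : (X ^ m : ℝ[X]) ∈ LinearMap.range D ⊔ R := sup_eq_top ▸ Submodule.mem_top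
  obtain ⟨_, ⟨q, rfl⟩, r, hr, hqr⟩ := Submodule.mem_sup.1 X_pow_mem
  exact ⟨q, -r, R.neg_mem hr, by rw [← hqr, add_neg_cancel_right]⟩
end
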